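/- For every δ > 1/2 and σ > 0, the function F(τ) = (τ/2)(δ − 1/2) + σ²/(2τ) + (τ/2)∫_{2/τ}^∞ (h − 2/τ)² p(h) dh is strictly convex on (0,∞). -/

import Mathlib

open MeasureTheory Set

/-- The standard normal density `p(h) = (1/√(2π)) e^{−h²/2}`. -/
noncomputable def gaussPDF (h : ℝ) : ℝ := (Real.sqrt (2 * Real.pi))⁻¹ * Real.exp (-(h ^ 2) / 2)

/-- The objective function
`F(τ) = (τ/2)(δ − 1/2) + σ²/(2τ) + (τ/2)∫_{2/τ}^∞ (h − 2/τ)² p(h) dh`. -/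
noncomputable def Fobj (δ σ τ : ℝ) : ℝ :=
  τ / 2 * (δ - 1 / 2) + σ ^ 2 / (2 * τ)
    + τ / 2 * ∫ h in Set.Ioi (2 / τ), (h - 2 / τ) ^ 2 * gaussPDF h

/-!
Substituting `s = 1 / τ` gives `F(τ) = τ G(1 / τ)`, where `G` is the sum of a constant, the strictly
convex quadratic `σ² s² / 2`, and half the integral of `max (h - 2s) 0 ^ 2` against the Gaussian
measure, which is convex in `s` because its integrand is. The perspective `τ ↦ τ G(1 / τ)` of a
strictly convex function is strictly convex, since `1 / (a x + b y)` is a convex combination of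
`1 / x` and `1 / y` with weights proportional to `a x` and `b y`.
-/

open ProbabilityTheory
open scoped NNReal

theorem strictConvexOn_const_smul {𝕜 E β : Type*} [CommSemiring 𝕜] [PartialOrder 𝕜]
    [AddCommMonoid E] [SMul 𝕜 E] [AddCommMonoid β] [PartialOrder β] [Module 𝕜 β]
    [PosSMulStrictMono 𝕜 β] {s : Set E} {f : E → β} {c : 𝕜} (hc : 0 < c)
    (hf : StrictConvexOn 𝕜 s f) : StrictConvexOn 𝕜 s fun x ↦ c • f x := by
  refine ⟨hf.1, fun x hx y hy hxy a b ha hb hab ↦ ?_⟩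
  calc c • f (a • x + b • y) < c • (a • f x + b • f y) :=
        smul_lt_smul_of_pos_left (hf.2 hx hy hxy ha hb hab) hc
    _ = a • c • f x + b • c • f y := by rw [smul_add, smul_comm c, smul_comm c]

theorem strictConvexOn_smul_comp_inv {𝕜 β : Type*} [Field 𝕜] [LinearOrder 𝕜]
    [IsStrictOrderedRing 𝕜] [AddCommMonoid β] [PartialOrder β] [Module 𝕜 β]
    [PosSMulStrictMono 𝕜 β] {f : 𝕜 → β} (hf : StrictConvexOn 𝕜 (Ioi 0) f) :
    StrictConvexOn 𝕜 (Ioi 0) fun t ↦ t • f t⁻¹ := by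
  refine ⟨convex_Ioi 0, fun x (hx : 0 < x) y (hy : 0 < y) hxy a b ha hb hab ↦ ?_⟩
  simp only [smul_eq_mul]
  set z := a * x + b * y with hz
  have hz_pos : 0 < z := by positivity
  have hcomb : (a * x / z) • x⁻¹ + (b * y / z) • y⁻¹ = z⁻¹ := by
    simp only [smul_eq_mul]
    field_simp
    exact hab
  have hlt : f z⁻¹ < (a * x / z) • f x⁻¹ + (b * y / z) • f y⁻¹ := by
    rw [← hcomb]
    exact hf.2 (inv_pos.2 hx) (inv_pos.2 hy) (inv_injective.ne hxy) (by positivity)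
      (by positivity) (by rw [← add_div, ← hz, div_self hz_pos.ne'])
  calc z • f z⁻¹ < z • ((a * x / z) • f x⁻¹ + (b * y / z) • f y⁻¹) :=
        smul_lt_smul_of_pos_left hlt hz_pos
    _ = a • x • f x⁻¹ + b • y • f y⁻¹ := by
        simp only [smul_add, smul_smul, mul_div_cancel₀ _ hz_pos.ne']

/-- The `n`-th upper partial moment of `μ` above the threshold `c`. -/
noncomputable def upperPartialMoment (μ : Measure ℝ) (n : ℕ) (c : ℝ) : ℝ :=
  ∫ h in Ioi c, (h - c) ^ n ∂μ

section UpperPartialMoment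

variable {μ : Measure ℝ} {n : ℕ}

theorem upperPartialMoment_eq_integral_max (hn : n ≠ 0) (c : ℝ) :
    upperPartialMoment μ n c = ∫ h, max (h - c) 0 ^ n ∂μ := by
  rw [upperPartialMoment, ← integral_indicator measurableSet_Ioi]
  congr 1 with h
  rcases lt_or_ge c h with hc | hc
  · rw [indicator_of_mem (mem_Ioi.2 hc), max_eq_left (sub_nonneg.2 hc.le)]
  · rw [indicator_of_notMem (notMem_Ioi.2 hc), max_eq_right (sub_nonpos.2 hc), zero_pow hn]

theorem convexOn_max_sub_pow (h : ℝ) (n : ℕ) :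
    ConvexOn ℝ univ fun c : ℝ ↦ max (h - c) 0 ^ n :=
  (((convexOn_const h convex_univ).sub (concaveOn_id convex_univ)).sup
    (convexOn_const 0 convex_univ)).pow (fun _ _ ↦ le_max_right _ _) n

theorem integrable_max_sub_pow [IsFiniteMeasure μ] (hμ : MemLp id n μ) (c : ℝ) :
    Integrable (fun h ↦ max (h - c) 0 ^ n) μ := by
  refine (hμ.sub (memLp_const c)).integrable_norm_pow'.mono' (by fun_prop) (ae_of_all _ fun h ↦ ?_)
  rw [Real.norm_of_nonneg (by positivity)]
  exact pow_le_pow_left₀ (le_max_right _ _) (max_le (le_abs_self _) (abs_nonneg _)) n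

theorem convexOn_upperPartialMoment [IsFiniteMeasure μ] (hn : n ≠ 0) (hμ : MemLp id n μ) :
    ConvexOn ℝ univ (upperPartialMoment μ n) := by
  simp only [funext (upperPartialMoment_eq_integral_max hn)]
  exact integral_convexOn_of_integrand_ae convex_univ
    (ae_of_all _ fun h ↦ convexOn_max_sub_pow h n) fun c _ ↦ integrable_max_sub_pow hμ c

end UpperPartialMoment

theorem setIntegral_gaussianReal_eq_setIntegral_smul {E : Type*} [NormedAddCommGroup E]
    [NormedSpace ℝ E] (m : ℝ) {v : ℝ≥0} (hv : v ≠ 0) {s : Set ℝ} (hs : MeasurableSet s)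
    (f : ℝ → E) :
    ∫ x in s, f x ∂gaussianReal m v = ∫ x in s, gaussianPDFReal m v x • f x := by
  simp only [gaussianReal_of_var_ne_zero m hv, ← toReal_gaussianPDF]
  exact setIntegral_withDensity_eq_setIntegral_toReal_smul (measurable_gaussianPDF m v)
    (ae_of_all _ fun _ ↦ gaussianPDF_lt_top) f hs

theorem gaussianPDFReal_zero_one : gaussianPDFReal 0 1 = gaussPDF := by
  ext h
  simp only [gaussianPDFReal, gaussPDF, NNReal.coe_one, mul_one, sub_zero]

theorem setIntegral_Ioi_mul_gaussPDF (n : ℕ) (c : ℝ) :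
    ∫ h in Ioi c, (h - c) ^ n * gaussPDF h = upperPartialMoment (gaussianReal 0 1) n c := by
  simp only [upperPartialMoment, gaussianPDFReal_zero_one, smul_eq_mul, mul_comm,
    setIntegral_gaussianReal_eq_setIntegral_smul 0 one_ne_zero measurableSet_Ioi]

/-- The function `G` with `F(τ) = τ G(1 / τ)`, for `μ` in place of the standard normal law. -/
noncomputable def perspectiveGenerator (μ : Measure ℝ) (δ σ s : ℝ) : ℝ :=
  (δ - 1 / 2) / 2 + σ ^ 2 / 2 * s ^ 2 + 1 / 2 * upperPartialMoment μ 2 (2 * s)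

theorem strictConvexOn_perspectiveGenerator {μ : Measure ℝ} [IsFiniteMeasure μ]
    (hμ : MemLp id 2 μ) (δ : ℝ) {σ : ℝ} (hσ : σ ≠ 0) :
    StrictConvexOn ℝ univ (perspectiveGenerator μ δ σ) := by
  have hquad : StrictConvexOn ℝ univ fun s : ℝ ↦ σ ^ 2 / 2 * s ^ 2 :=
    strictConvexOn_const_smul (by positivity) (even_two.strictConvexOn_pow two_ne_zero)
  have hmoment : ConvexOn ℝ univ fun s ↦ upperPartialMoment μ 2 (2 * s) :=
    (convexOn_upperPartialMoment two_ne_zero hμ).comp_linearMap (LinearMap.mulLeft ℝ 2)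
  exact ((convexOn_const _ convex_univ).add_strictConvexOn hquad).add_convexOn
    (hmoment.smul one_half_pos.le)

theorem Fobj_eq_mul_perspectiveGenerator_inv (δ σ τ : ℝ) :
    Fobj δ σ τ = τ * perspectiveGenerator (gaussianReal 0 1) δ σ τ⁻¹ := by
  rw [Fobj, perspectiveGenerator, setIntegral_Ioi_mul_gaussPDF, div_eq_mul_inv 2 τ]
  rcases eq_or_ne τ 0 with rfl | hτ
  · simp
  · field_simp

theorem strictConvexOn_Fobj_general (δ : ℝ) {σ : ℝ} (hσ : σ ≠ 0) :
    StrictConvexOn ℝ (Ioi 0) (Fobj δ σ) := by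
  have hG : StrictConvexOn ℝ (Ioi 0) (perspectiveGenerator (gaussianReal 0 1) δ σ) :=
    (strictConvexOn_perspectiveGenerator (memLp_id_gaussianReal 2) δ hσ).subset
      (subset_univ _) (convex_Ioi 0)
  rw [funext (Fobj_eq_mul_perspectiveGenerator_inv δ σ)]
  exact strictConvexOn_smul_comp_inv hG

/-- For every `δ > 1/2` and `σ > 0`, the function `F` is strictly convex on `(0,∞)`. -/
theorem strictConvexOn_Fobj (δ σ : ℝ) (hδ : 1 / 2 < δ) (hσ : 0 < σ) :
    StrictConvexOn ℝ (Set.Ioi (0 : ℝ)) (Fobj δ σ) :=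
  strictConvexOn_Fobj_general δ hσ.ne'
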